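/- (Poincaré-type inequality on a thin overlap region, three-dimensional version.) There exists a constant c > 0, independent of φ, ζ, x_M, y_M, d_o and h, such that for every x_M, y_M > 0, every h > 0, every d_o with 0 < d_o ≤ h, every continuous ζ: [0, x_M] × [0, y_M] → ℝ with 0 < ζ(x,y) ≤ d_o, and every function φ that is C¹ on a neighborhood of the closure of Ω_o = {(x,y,z) ∈ ℝ³ : 0 < x < x_M, 0 < y < y_M, 0 < z < ζ(x,y)}, one has ∫_{Ω_o} φ² ≤ c · d_o · h · ( ∫_{Ω_o} |∇φ|² + (1/h) ∫_0^{y_M} ∫_0^{x_M} φ(x,y,ζ(x,y))² dx dy ). -/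

import Mathlib

/-!
On a segment `[a, b]`, the derivative of `(z - a) ‖u‖²` is
`‖u‖² + 2 (z - a) ⟪u, u'⟫ ≥ ‖u‖² / 2 - 2 (b - a)² ‖u'‖²`, so integrating it bounds `∫ ‖u‖²` by the
boundary term `2 (b - a) ‖u b‖²` plus `4 (b - a)² ∫ ‖u'‖²`. Applied on every vertical segment of the
overlap region and integrated over the base by Fubini, this gives the inequality with `c = 4`; only
the vertical derivative of `φ` enters.
-/

open MeasureTheory Set

/-- Partial derivative of `φ : ℝ × ℝ × ℝ → ℝ` with respect to the first variable. -/
noncomputable def pd3x (φ : ℝ × ℝ × ℝ → ℝ) (p : ℝ × ℝ × ℝ) : ℝ :=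
  deriv (fun t => φ (t, p.2.1, p.2.2)) p.1

/-- Partial derivative of `φ : ℝ × ℝ × ℝ → ℝ` with respect to the second variable. -/
noncomputable def pd3y (φ : ℝ × ℝ × ℝ → ℝ) (p : ℝ × ℝ × ℝ) : ℝ :=
  deriv (fun t => φ (p.1, t, p.2.2)) p.2.1

/-- Partial derivative of `φ : ℝ × ℝ × ℝ → ℝ` with respect to the third variable. -/
noncomputable def pd3z (φ : ℝ × ℝ × ℝ → ℝ) (p : ℝ × ℝ × ℝ) : ℝ :=
  deriv (fun t => φ (p.1, p.2.1, t)) p.2.2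

/-- Squared Euclidean norm of the gradient of `φ : ℝ × ℝ × ℝ → ℝ`. -/
noncomputable def gradSq3 (φ : ℝ × ℝ × ℝ → ℝ) (p : ℝ × ℝ × ℝ) : ℝ :=
  (pd3x φ p) ^ 2 + (pd3y φ p) ^ 2 + (pd3z φ p) ^ 2

/-- The three-dimensional overlap region under the graph of `ζ`. -/
def ovl3 (xM yM : ℝ) (ζ : ℝ × ℝ → ℝ) : Set (ℝ × ℝ × ℝ) :=
  {p : ℝ × ℝ × ℝ | 0 < p.1 ∧ p.1 < xM ∧ 0 < p.2.1 ∧ p.2.1 < yM ∧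
    0 < p.2.2 ∧ p.2.2 < ζ (p.1, p.2.1)}

section Segment

variable {E : Type*} [NormedAddCommGroup E] [InnerProductSpace ℝ E]

open scoped RealInnerProductSpace

lemma half_norm_sq_sub_le_norm_sq_add_inner (v w : E) {t L : ℝ} (ht : 0 ≤ t) (htL : t ≤ L) :
    1 / 2 * ‖v‖ ^ 2 - 2 * L ^ 2 * ‖w‖ ^ 2 ≤ ‖v‖ ^ 2 + 2 * t * ⟪v, w⟫ := by
  have expand : ‖v + (2 * t) • w‖ ^ 2 = ‖v‖ ^ 2 + 4 * t * ⟪v, w⟫ + 4 * t ^ 2 * ‖w‖ ^ 2 := by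
    rw [norm_add_sq_real, real_inner_smul_right, norm_smul, mul_pow, Real.norm_eq_abs, sq_abs]
    ring
  have ht_sq : t ^ 2 * ‖w‖ ^ 2 ≤ L ^ 2 * ‖w‖ ^ 2 := by gcongr
  linarith [sq_nonneg ‖v + (2 * t) • w‖]

lemma integral_norm_sq_add_inner_eq {a b : ℝ} (hab : a ≤ b) {u u' : ℝ → E}
    (hu : ContinuousOn u (Icc a b)) (hderiv : ∀ z ∈ Ioo a b, HasDerivAt u (u' z) z)
    (hu' : ContinuousOn u' (Icc a b)) :
    ∫ z in a..b, (‖u z‖ ^ 2 + 2 * (z - a) * ⟪u z, u' z⟫) = (b - a) * ‖u b‖ ^ 2 := by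
  rw [intervalIntegral.integral_eq_sub_of_hasDerivAt_of_le (f := fun z ↦ (z - a) * ‖u z‖ ^ 2) hab]
  · simp
  · fun_prop
  · intro z hz
    refine (((hasDerivAt_id' z).sub_const a).fun_mul (hderiv z hz).norm_sq).congr_deriv ?_
    ring
  · refine ContinuousOn.intervalIntegrable_of_Icc hab ?_
    exact (hu.norm.pow 2).add (ContinuousOn.mul (by fun_prop) (hu.inner (𝕜 := ℝ) hu'))

lemma setIntegral_Ioo_norm_sq_le {a b : ℝ} (hab : a ≤ b) {u u' : ℝ → E}
    (hu : ContinuousOn u (Icc a b)) (hderiv : ∀ z ∈ Ioo a b, HasDerivAt u (u' z) z)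
    (hu' : ContinuousOn u' (Icc a b)) :
    ∫ z in Ioo a b, ‖u z‖ ^ 2 ≤
      2 * (b - a) * ‖u b‖ ^ 2 + 4 * (b - a) ^ 2 * ∫ z in Ioo a b, ‖u' z‖ ^ 2 := by
  simp only [← integral_Ioc_eq_integral_Ioo, ← intervalIntegral.integral_of_le hab]
  have hu_sq : IntervalIntegrable (fun z ↦ ‖u z‖ ^ 2) volume a b :=
    (hu.norm.pow 2).intervalIntegrable_of_Icc hab
  have hu'_sq : IntervalIntegrable (fun z ↦ ‖u' z‖ ^ 2) volume a b :=
    (hu'.norm.pow 2).intervalIntegrable_of_Icc hab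
  have hinner : IntervalIntegrable (fun z ↦ 2 * (z - a) * ⟪u z, u' z⟫) volume a b :=
    (ContinuousOn.mul (by fun_prop) (hu.inner hu')).intervalIntegrable_of_Icc hab
  have lower_bound :
      ∫ z in a..b, (1 / 2 * ‖u z‖ ^ 2 - 2 * (b - a) ^ 2 * ‖u' z‖ ^ 2) ≤ (b - a) * ‖u b‖ ^ 2 := by
    rw [← integral_norm_sq_add_inner_eq hab hu hderiv hu']
    refine intervalIntegral.integral_mono_on hab ((hu_sq.const_mul _).sub (hu'_sq.const_mul _))
      (hu_sq.add hinner) fun z hz ↦ ?_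
    exact half_norm_sq_sub_le_norm_sq_add_inner _ _ (sub_nonneg.2 hz.1) (sub_le_sub_right hz.2 a)
  rw [intervalIntegral.integral_sub (hu_sq.const_mul _) (hu'_sq.const_mul _),
    intervalIntegral.integral_const_mul, intervalIntegral.integral_const_mul] at lower_bound
  linarith

end Segment

section RegionBetween

variable {α E : Type*} {f g : α → ℝ} {s : Set α}

lemma indicator_regionBetween_apply [Zero E] (F : α × ℝ → E) (x : α) (z : ℝ) :
    (regionBetween f g s).indicator F (x, z) =
      s.indicator (fun x ↦ (Ioo (f x) (g x)).indicator (fun z ↦ F (x, z)) z) x := by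
  by_cases hx : x ∈ s <;> simp [indicator, regionBetween, hx]

variable [NormedAddCommGroup E] [NormedSpace ℝ E]

lemma integral_indicator_regionBetween_apply (F : α × ℝ → E) (x : α) :
    ∫ z, (regionBetween f g s).indicator F (x, z) =
      s.indicator (fun x ↦ ∫ z in Ioo (f x) (g x), F (x, z)) x := by
  by_cases hx : x ∈ s <;>
    simp [indicator_regionBetween_apply, hx, integral_indicator measurableSet_Ioo]

variable [MeasurableSpace α] {μ : Measure α}

lemma nullMeasurableSet_regionBetween_of_restrict [SFinite μ] (hs : MeasurableSet s)
    (hf : AEMeasurable f (μ.restrict s)) (hg : AEMeasurable g (μ.restrict s)) :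
    NullMeasurableSet (regionBetween f g s) (μ.prod volume) := by
  rw [← nullMeasurableSet_restrict_of_subset (regionBetween_subset f g s),
    ← Measure.restrict_prod_eq_prod_univ]
  exact nullMeasurableSet_regionBetween _ hf hg hs.nullMeasurableSet

variable [SFinite μ] {F : α × ℝ → E}

lemma integrableOn_integral_of_integrableOn_regionBetween (hs : MeasurableSet s)
    (hf : AEMeasurable f (μ.restrict s)) (hg : AEMeasurable g (μ.restrict s))
    (hF : IntegrableOn F (regionBetween f g s) (μ.prod volume)) :
    IntegrableOn (fun x ↦ ∫ z in Ioo (f x) (g x), F (x, z)) s μ := by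
  have hΩ := nullMeasurableSet_regionBetween_of_restrict hs hf hg
  simpa only [integral_indicator_regionBetween_apply, integrable_indicator_iff hs] using
    (hF.integrable_indicator₀ hΩ).integral_prod_left

lemma setIntegral_regionBetween (hs : MeasurableSet s)
    (hf : AEMeasurable f (μ.restrict s)) (hg : AEMeasurable g (μ.restrict s))
    (hF : IntegrableOn F (regionBetween f g s) (μ.prod volume)) :
    ∫ p in regionBetween f g s, F p ∂μ.prod volume =
      ∫ x in s, (∫ z in Ioo (f x) (g x), F (x, z)) ∂μ := by
  have hΩ := nullMeasurableSet_regionBetween_of_restrict hs hf hg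
  rw [← integral_indicator₀ hΩ, integral_prod _ (hF.integrable_indicator₀ hΩ)]
  simp only [integral_indicator_regionBetween_apply, integral_indicator hs]

end RegionBetween

lemma setIntegral_regionBetween_norm_sq_le {α E : Type*} [MeasurableSpace α] {μ : Measure α}
    [SFinite μ] [NormedAddCommGroup E] [InnerProductSpace ℝ E] {f g : α → ℝ} {s : Set α} {d : ℝ}
    (hs : MeasurableSet s)
    (hf : AEMeasurable f (μ.restrict s)) (hg : AEMeasurable g (μ.restrict s))
    (hfg : ∀ x ∈ s, f x ≤ g x) (hd : ∀ x ∈ s, g x - f x ≤ d) {u u' : α × ℝ → E}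
    (hu : ∀ x ∈ s, ContinuousOn (fun z ↦ u (x, z)) (Icc (f x) (g x)))
    (hderiv : ∀ x ∈ s, ∀ z ∈ Ioo (f x) (g x), HasDerivAt (fun z ↦ u (x, z)) (u' (x, z)) z)
    (hu' : ∀ x ∈ s, ContinuousOn (fun z ↦ u' (x, z)) (Icc (f x) (g x)))
    (hu_sq : IntegrableOn (fun p ↦ ‖u p‖ ^ 2) (regionBetween f g s) (μ.prod volume))
    (hu'_sq : IntegrableOn (fun p ↦ ‖u' p‖ ^ 2) (regionBetween f g s) (μ.prod volume))
    (htop : IntegrableOn (fun x ↦ ‖u (x, g x)‖ ^ 2) s μ) :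
    ∫ p in regionBetween f g s, ‖u p‖ ^ 2 ∂μ.prod volume ≤
      2 * d * (∫ x in s, ‖u (x, g x)‖ ^ 2 ∂μ) +
        4 * d ^ 2 * ∫ p in regionBetween f g s, ‖u' p‖ ^ 2 ∂μ.prod volume := by
  have hu_fiber := integrableOn_integral_of_integrableOn_regionBetween hs hf hg hu_sq
  have hu'_fiber := integrableOn_integral_of_integrableOn_regionBetween hs hf hg hu'_sq
  rw [setIntegral_regionBetween hs hf hg hu_sq, setIntegral_regionBetween hs hf hg hu'_sq,
    ← integral_const_mul, ← integral_const_mul,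
    ← integral_add (htop.const_mul _) (hu'_fiber.const_mul _)]
  refine setIntegral_mono_on hu_fiber ((htop.const_mul _).add (hu'_fiber.const_mul _)) hs
    fun x hx ↦ ?_
  have hlen_nonneg : 0 ≤ g x - f x := sub_nonneg.2 (hfg x hx)
  have hlen_le : g x - f x ≤ d := hd x hx
  calc ∫ z in Ioo (f x) (g x), ‖u (x, z)‖ ^ 2
      ≤ 2 * (g x - f x) * ‖u (x, g x)‖ ^ 2 +
          4 * (g x - f x) ^ 2 * ∫ z in Ioo (f x) (g x), ‖u' (x, z)‖ ^ 2 :=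
        setIntegral_Ioo_norm_sq_le (hfg x hx) (hu x hx) (hderiv x hx) (hu' x hx)
    _ ≤ 2 * d * ‖u (x, g x)‖ ^ 2 + 4 * d ^ 2 * ∫ z in Ioo (f x) (g x), ‖u' (x, z)‖ ^ 2 := by
        gcongr

lemma integrable_comp_of_continuousOn_isCompact {α X E : Type*} [MeasurableSpace α]
    {μ : Measure α} [IsFiniteMeasure μ] [TopologicalSpace X] [T2Space X]
    [TopologicalSpace.PseudoMetrizableSpace X] [MeasurableSpace X] [OpensMeasurableSpace X]
    [NormedAddCommGroup E] {F : X → E} {K : Set X} {T : α → X} (hK : IsCompact K)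
    (hF : ContinuousOn F K) (hT : AEMeasurable T μ) (hTK : ∀ᵐ x ∂μ, T x ∈ K) :
    Integrable (fun x ↦ F (T x)) μ := by
  have map_mem : ∀ᵐ y ∂μ.map T, y ∈ K := (ae_map_iff hT hK.measurableSet).2 hTK
  have hF_map : IntegrableOn F K (μ.map T) := hF.integrableOn_compact hK
  rw [IntegrableOn, Measure.restrict_eq_self_of_ae_mem map_mem] at hF_map
  exact hF_map.comp_aemeasurable hT

lemma continuousOn_lineDeriv_of_contDiffOn {𝕜 V W : Type*} [NontriviallyNormedField 𝕜]
    [NormedAddCommGroup V] [NormedSpace 𝕜 V] [NormedAddCommGroup W] [NormedSpace 𝕜 W]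
    {ψ : V → W} {A : Set V} (hA : IsOpen A) (hψ : ContDiffOn 𝕜 1 ψ A) (v : V) :
    ContinuousOn (fun x ↦ lineDeriv 𝕜 ψ x v) A :=
  ((hψ.continuousOn_fderiv_of_isOpen hA le_rfl).clm_apply continuousOn_const).congr fun _ hx ↦
    ((hψ.differentiableOn one_ne_zero).differentiableAt (hA.mem_nhds hx)).lineDeriv_eq_fderiv

section PartialDerivatives

variable {φ : ℝ × ℝ × ℝ → ℝ} {p : ℝ × ℝ × ℝ} {U : Set (ℝ × ℝ × ℝ)}

lemma pd3x_eq_lineDeriv (φ : ℝ × ℝ × ℝ → ℝ) (p : ℝ × ℝ × ℝ) :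
    pd3x φ p = lineDeriv ℝ φ p (1, 0, 0) := by
  obtain ⟨x, y, z⟩ := p
  simpa [pd3x, lineDeriv] using (deriv_comp_const_add (fun t ↦ φ (t, y, z)) x 0).symm

lemma pd3y_eq_lineDeriv (φ : ℝ × ℝ × ℝ → ℝ) (p : ℝ × ℝ × ℝ) :
    pd3y φ p = lineDeriv ℝ φ p (0, 1, 0) := by
  obtain ⟨x, y, z⟩ := p
  simpa [pd3y, lineDeriv] using (deriv_comp_const_add (fun t ↦ φ (x, t, z)) y 0).symm

lemma pd3z_eq_lineDeriv (φ : ℝ × ℝ × ℝ → ℝ) (p : ℝ × ℝ × ℝ) :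
    pd3z φ p = lineDeriv ℝ φ p (0, 0, 1) := by
  obtain ⟨x, y, z⟩ := p
  simpa [pd3z, lineDeriv] using (deriv_comp_const_add (fun t ↦ φ (x, y, t)) z 0).symm

lemma hasDerivAt_pd3z (hφ : DifferentiableAt ℝ φ p) :
    HasDerivAt (fun t ↦ φ (p.1, p.2.1, t)) (pd3z φ p) p.2.2 :=
  (hφ.comp p.2.2 (f := fun t ↦ (p.1, p.2.1, t)) (by fun_prop)).hasDerivAt

lemma continuousOn_pd3z (hU : IsOpen U) (hφ : ContDiffOn ℝ 1 φ U) : ContinuousOn (pd3z φ) U := by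
  simpa only [← pd3z_eq_lineDeriv] using continuousOn_lineDeriv_of_contDiffOn hU hφ (0, 0, 1)

lemma continuousOn_gradSq3 (hU : IsOpen U) (hφ : ContDiffOn ℝ 1 φ U) :
    ContinuousOn (gradSq3 φ) U := by
  have hx := continuousOn_lineDeriv_of_contDiffOn hU hφ (1, 0, 0)
  have hy := continuousOn_lineDeriv_of_contDiffOn hU hφ (0, 1, 0)
  simp only [← pd3x_eq_lineDeriv, ← pd3y_eq_lineDeriv] at hx hy
  exact ((hx.pow 2).add (hy.pow 2)).add ((continuousOn_pd3z hU hφ).pow 2)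

lemma pd3z_sq_le_gradSq3 (φ : ℝ × ℝ × ℝ → ℝ) (p : ℝ × ℝ × ℝ) : pd3z φ p ^ 2 ≤ gradSq3 φ p :=
  le_add_of_nonneg_left (add_nonneg (sq_nonneg _) (sq_nonneg _))

end PartialDerivatives

section OverlapRegion

variable {xM yM d : ℝ} {ζ : ℝ × ℝ → ℝ}

lemma preimage_prodAssoc_ovl3 (xM yM : ℝ) (ζ : ℝ × ℝ → ℝ) :
    MeasurableEquiv.prodAssoc ⁻¹' ovl3 xM yM ζ =
      regionBetween (fun _ ↦ 0) ζ (Ioo 0 xM ×ˢ Ioo 0 yM) := by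
  ext p
  simp [ovl3, regionBetween, MeasurableEquiv.prodAssoc, and_assoc]

variable {E : Type*} [NormedAddCommGroup E]

lemma integrableOn_ovl3_iff {F : ℝ × ℝ × ℝ → E} :
    IntegrableOn F (ovl3 xM yM ζ) ↔
      IntegrableOn (fun p : (ℝ × ℝ) × ℝ ↦ F (p.1.1, p.1.2, p.2))
        (regionBetween (fun _ ↦ 0) ζ (Ioo 0 xM ×ˢ Ioo 0 yM)) := by
  rw [← preimage_prodAssoc_ovl3]
  exact (volume_preserving_prodAssoc.integrableOn_comp_preimage
    (MeasurableEquiv.measurableEmbedding _)).symm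

lemma setIntegral_ovl3 [NormedSpace ℝ E] (F : ℝ × ℝ × ℝ → E) :
    ∫ p in ovl3 xM yM ζ, F p =
      ∫ p in regionBetween (fun _ ↦ 0) ζ (Ioo 0 xM ×ˢ Ioo 0 yM), F (p.1.1, p.1.2, p.2) := by
  rw [← preimage_prodAssoc_ovl3]
  exact (volume_preserving_prodAssoc.setIntegral_preimage_emb
    (MeasurableEquiv.measurableEmbedding _) F _).symm

lemma isCompact_closure_ovl3 (hζ : ∀ q ∈ Ioo 0 xM ×ˢ Ioo 0 yM, ζ q ≤ d) :
    IsCompact (closure (ovl3 xM yM ζ)) := by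
  refine (isCompact_Icc.prod (isCompact_Icc.prod isCompact_Icc)).closure_of_subset
    (K := Icc 0 xM ×ˢ Icc 0 yM ×ˢ Icc 0 d) ?_
  rintro p ⟨hx0, hxM, hy0, hyM, hz0, hzζ⟩
  exact ⟨⟨hx0.le, hxM.le⟩, ⟨hy0.le, hyM.le⟩, hz0.le,
    hzζ.le.trans (hζ (p.1, p.2.1) ⟨⟨hx0, hxM⟩, hy0, hyM⟩)⟩

lemma mem_closure_ovl3 {q : ℝ × ℝ} (hq : q ∈ Ioo 0 xM ×ˢ Ioo 0 yM) (hpos : 0 < ζ q) {z : ℝ}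
    (hz : z ∈ Icc 0 (ζ q)) : (q.1, q.2, z) ∈ closure (ovl3 xM yM ζ) := by
  rw [← closure_Ioo hpos.ne] at hz
  refine map_mem_closure (f := fun t ↦ (q.1, q.2, t)) (by fun_prop) hz fun t ht ↦ ?_
  exact ⟨hq.1.1, hq.1.2, hq.2.1, hq.2.2, ht.1, ht.2⟩

lemma integrableOn_ovl3_of_continuousOn (hζ : ∀ q ∈ Ioo 0 xM ×ˢ Ioo 0 yM, ζ q ≤ d)
    {F : ℝ × ℝ × ℝ → E} (hF : ContinuousOn F (closure (ovl3 xM yM ζ))) :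
    IntegrableOn F (ovl3 xM yM ζ) :=
  (hF.integrableOn_compact (isCompact_closure_ovl3 hζ)).mono_set subset_closure

lemma integrableOn_top_ovl3_of_continuousOn
    (hζm : AEMeasurable ζ (volume.restrict (Ioo 0 xM ×ˢ Ioo 0 yM)))
    (hζ : ∀ q ∈ Ioo 0 xM ×ˢ Ioo 0 yM, 0 < ζ q ∧ ζ q ≤ d)
    {F : ℝ × ℝ × ℝ → E} (hF : ContinuousOn F (closure (ovl3 xM yM ζ))) :
    IntegrableOn (fun q : ℝ × ℝ ↦ F (q.1, q.2, ζ q)) (Ioo 0 xM ×ˢ Ioo 0 yM) := by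
  have hbase : volume (Ioo 0 xM ×ˢ Ioo 0 yM) < ⊤ :=
    ((Metric.isBounded_Ioo 0 xM).prod (Metric.isBounded_Ioo 0 yM)).measure_lt_top
  have : IsFiniteMeasure (volume.restrict (Ioo 0 xM ×ˢ Ioo 0 yM)) :=
    isFiniteMeasure_restrict.2 hbase.ne
  refine integrable_comp_of_continuousOn_isCompact (T := fun q : ℝ × ℝ ↦ (q.1, q.2, ζ q))
    (isCompact_closure_ovl3 fun q hq ↦ (hζ q hq).2) hF (by fun_prop) ?_
  exact ae_restrict_of_forall_mem (measurableSet_Ioo.prod measurableSet_Ioo) fun q hq ↦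
    mem_closure_ovl3 hq (hζ q hq).1 (right_mem_Icc.2 (hζ q hq).1.le)

variable {U : Set (ℝ × ℝ × ℝ)} {φ : ℝ × ℝ × ℝ → ℝ}

lemma setIntegral_ovl3_sq_le
    (hζm : AEMeasurable ζ (volume.restrict (Ioo 0 xM ×ˢ Ioo 0 yM)))
    (hζ : ∀ q ∈ Ioo 0 xM ×ˢ Ioo 0 yM, 0 < ζ q ∧ ζ q ≤ d)
    (hU : IsOpen U) (hΩU : closure (ovl3 xM yM ζ) ⊆ U) (hφ : ContDiffOn ℝ 1 φ U) :
    ∫ p in ovl3 xM yM ζ, φ p ^ 2 ≤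
      2 * d * (∫ q in Ioo 0 xM ×ˢ Ioo 0 yM, φ (q.1, q.2, ζ q) ^ 2) +
        4 * d ^ 2 * ∫ p in ovl3 xM yM ζ, pd3z φ p ^ 2 := by
  have hφc : ContinuousOn φ U := hφ.continuousOn
  have hφz : ContinuousOn (pd3z φ) U := continuousOn_pd3z hU hφ
  have hζd : ∀ q ∈ Ioo 0 xM ×ˢ Ioo 0 yM, ζ q ≤ d := fun q hq ↦ (hζ q hq).2
  have hsegment : ∀ q ∈ Ioo 0 xM ×ˢ Ioo 0 yM, ∀ z ∈ Icc 0 (ζ q), (q.1, q.2, z) ∈ U :=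
    fun q hq z hz ↦ hΩU (mem_closure_ovl3 hq (hζ q hq).1 hz)
  have key := setIntegral_regionBetween_norm_sq_le (μ := volume) (f := fun _ ↦ 0) (d := d)
    (u := fun p : (ℝ × ℝ) × ℝ ↦ φ (p.1.1, p.1.2, p.2))
    (u' := fun p : (ℝ × ℝ) × ℝ ↦ pd3z φ (p.1.1, p.1.2, p.2))
    (measurableSet_Ioo.prod measurableSet_Ioo) aemeasurable_const hζm
    (fun q hq ↦ (hζ q hq).1.le) (fun q hq ↦ by simpa using hζd q hq)
    (fun q hq ↦ hφc.comp (by fun_prop) (hsegment q hq))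
    (fun q hq z hz ↦ hasDerivAt_pd3z <| (hφ.differentiableOn one_ne_zero).differentiableAt <|
      hU.mem_nhds (hsegment q hq z (Ioo_subset_Icc_self hz)))
    (fun q hq ↦ hφz.comp (by fun_prop) (hsegment q hq))
    (integrableOn_ovl3_iff.1 <|
      integrableOn_ovl3_of_continuousOn hζd ((hφc.mono hΩU).norm.pow 2))
    (integrableOn_ovl3_iff.1 <|
      integrableOn_ovl3_of_continuousOn hζd ((hφz.mono hΩU).norm.pow 2))
    (integrableOn_top_ovl3_of_continuousOn hζm hζ ((hφc.mono hΩU).norm.pow 2))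
  simpa only [setIntegral_ovl3, Measure.volume_eq_prod (ℝ × ℝ), Real.norm_eq_abs, sq_abs] using key

lemma setIntegral_ovl3_pd3z_sq_le (hζ : ∀ q ∈ Ioo 0 xM ×ˢ Ioo 0 yM, ζ q ≤ d)
    (hU : IsOpen U) (hΩU : closure (ovl3 xM yM ζ) ⊆ U) (hφ : ContDiffOn ℝ 1 φ U) :
    ∫ p in ovl3 xM yM ζ, pd3z φ p ^ 2 ≤ ∫ p in ovl3 xM yM ζ, gradSq3 φ p :=
  setIntegral_mono
    (integrableOn_ovl3_of_continuousOn hζ (((continuousOn_pd3z hU hφ).mono hΩU).pow 2))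
    (integrableOn_ovl3_of_continuousOn hζ ((continuousOn_gradSq3 hU hφ).mono hΩU))
    (pd3z_sq_le_gradSq3 φ)

theorem poincare_thin_overlap_3d_general {h : ℝ} (hd : 0 < d) (hdh : d ≤ h)
    (hζm : AEMeasurable ζ (volume.restrict (Ioo 0 xM ×ˢ Ioo 0 yM)))
    (hζ : ∀ q ∈ Ioo 0 xM ×ˢ Ioo 0 yM, 0 < ζ q ∧ ζ q ≤ d)
    (hU : IsOpen U) (hΩU : closure (ovl3 xM yM ζ) ⊆ U) (hφ : ContDiffOn ℝ 1 φ U) :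
    ∫ p in ovl3 xM yM ζ, φ p ^ 2 ≤
      4 * d * h * ((∫ p in ovl3 xM yM ζ, gradSq3 φ p) +
        (1 / h) * ∫ q in Ioo 0 xM ×ˢ Ioo 0 yM, φ (q.1, q.2, ζ q) ^ 2) := by
  have hh : 0 < h := hd.trans_le hdh
  have hgrad := setIntegral_ovl3_pd3z_sq_le (fun q hq ↦ (hζ q hq).2) hU hΩU hφ
  calc ∫ p in ovl3 xM yM ζ, φ p ^ 2
      ≤ 2 * d * (∫ q in Ioo 0 xM ×ˢ Ioo 0 yM, φ (q.1, q.2, ζ q) ^ 2) +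
          4 * (d * d) * ∫ p in ovl3 xM yM ζ, pd3z φ p ^ 2 := by
        simpa only [sq d] using setIntegral_ovl3_sq_le hζm hζ hU hΩU hφ
    _ ≤ 4 * d * (∫ q in Ioo 0 xM ×ˢ Ioo 0 yM, φ (q.1, q.2, ζ q) ^ 2) +
          4 * (d * h) * ∫ p in ovl3 xM yM ζ, gradSq3 φ p := by
        gcongr
        norm_num
    _ = _ := by
        field_simp
        ring

end OverlapRegion

/-- Poincaré-type inequality on a thin overlap region,
three-dimensional version. There is a universal constant `c > 0` such that
`∫_{Ω_o} φ² ≤ c d_o h ( ∫_{Ω_o} |∇φ|² + (1/h) ∫_0^{y_M}∫_0^{x_M} φ(x,y,ζ(x,y))² dx dy )`. -/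
theorem poincare_thin_overlap_3d :
    ∃ c : ℝ, 0 < c ∧
      ∀ (xM yM h dO : ℝ), 0 < xM → 0 < yM → 0 < h → 0 < dO → dO ≤ h →
      ∀ ζ : ℝ × ℝ → ℝ, ContinuousOn ζ (Icc 0 xM ×ˢ Icc 0 yM) →
        (∀ q ∈ Icc (0 : ℝ) xM ×ˢ Icc (0 : ℝ) yM, 0 < ζ q ∧ ζ q ≤ dO) →
      ∀ (U : Set (ℝ × ℝ × ℝ)), IsOpen U → closure (ovl3 xM yM ζ) ⊆ U →
      ∀ φ : ℝ × ℝ × ℝ → ℝ, ContDiffOn ℝ 1 φ U →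
        (∫ p in ovl3 xM yM ζ, (φ p) ^ 2) ≤
          c * dO * h * ((∫ p in ovl3 xM yM ζ, gradSq3 φ p) +
            (1 / h) * ∫ q in Ioo (0 : ℝ) xM ×ˢ Ioo (0 : ℝ) yM,
              (φ (q.1, q.2, ζ q)) ^ 2) := by
  have hbase {x y : ℝ} : Ioo 0 x ×ˢ Ioo 0 y ⊆ Icc 0 x ×ˢ Icc 0 y :=
    prod_mono Ioo_subset_Icc_self Ioo_subset_Icc_self
  exact ⟨4, by norm_num, fun xM yM h dO _ _ _ hd hdh ζ hζc hζ U hU hΩU φ hφ ↦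
    poincare_thin_overlap_3d_general hd hdh
      ((hζc.mono hbase).aemeasurable (measurableSet_Ioo.prod measurableSet_Ioo))
      (fun q hq ↦ hζ q (hbase hq)) hU hΩU hφ⟩
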